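/- For any m×m Hermitian complex matrix Q, the Toeplitzification operator is a contraction in spectral norm: ‖𝒯(Q)‖ ≤ ‖Q‖. -/

import Mathlib

open MeasureTheory ProbabilityTheory Filter Matrix Real
open scoped ComplexOrder

noncomputable section

/-- Spectral norm (largest singular value) of a complex matrix. -/
def opNorm {a b : ℕ} (A : Matrix (Fin a) (Fin b) ℂ) : ℝ :=
  ‖LinearMap.toContinuousLinearMap (Matrix.toEuclideanLin A)‖

/-- Fourier vector `d_m(λ) = m^{-1/2} (1, e^{-iλ}, …, e^{-i(m-1)λ})ᵀ`. -/
def dm (m : ℕ) (l : ℝ) : Fin m → ℂ :=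
  fun j => (Real.sqrt m : ℂ)⁻¹ * Complex.exp (-(Complex.I) * ((j : ℕ) : ℂ) * (l : ℂ))

/-- Sum of the entries of the `k`-th superdiagonal of `A`, divided by `m`. -/
def supDiagAvg {m : ℕ} (A : Matrix (Fin m) (Fin m) ℂ) (k : ℕ) : ℂ :=
  (m : ℂ)⁻¹ * ∑ l : Fin m, if h : (l : ℕ) + k < m then A l ⟨(l : ℕ) + k, h⟩ else 0

/-- Sum of the entries of the `k`-th subdiagonal of `A`, divided by `m`. -/
def subDiagAvg {m : ℕ} (A : Matrix (Fin m) (Fin m) ℂ) (k : ℕ) : ℂ :=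
  (m : ℂ)⁻¹ * ∑ l : Fin m, if h : (l : ℕ) + k < m then A ⟨(l : ℕ) + k, h⟩ l else 0

/-- Averaged `k`-th diagonal of `A`, for `k : ℤ`. -/
def diagAvg {m : ℕ} (A : Matrix (Fin m) (Fin m) ℂ) (k : ℤ) : ℂ :=
  if 0 ≤ k then supDiagAvg A k.toNat else subDiagAvg A (-k).toNat

/-- The Toeplitzification operator `𝒯`. -/
def toep {m : ℕ} (A : Matrix (Fin m) (Fin m) ℂ) : Matrix (Fin m) (Fin m) ℂ :=
  Matrix.of fun i j =>
    if (i : ℕ) ≤ (j : ℕ) then supDiagAvg A ((j : ℕ) - (i : ℕ))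
    else star (supDiagAvg A ((i : ℕ) - (j : ℕ)))

/-- The standard complex Gaussian distribution (independent real and imaginary
parts, each `N(0, 1/2)`, so that the variance `E|x|²` equals `1`). -/
def stdComplexGaussian : Measure ℂ :=
  Measure.map (Complex.measurableEquivRealProd.symm)
    ((gaussianReal 0 (1/2)).prod (gaussianReal 0 (1/2)))

/-- Outer product `z z^H` of a vector with itself. -/
def vecOuter {m : ℕ} (z : Fin m → ℂ) : Matrix (Fin m) (Fin m) ℂ :=
  Matrix.of fun a b => z a * star (z b)

instance matrixMeasurableSpace {m n : ℕ} : MeasurableSpace (Matrix (Fin m) (Fin n) ℂ) :=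
  (inferInstance : MeasurableSpace (Fin m → Fin n → ℂ))

/-- `i`-th column of a matrix, as a vector. -/
def colv {m N : ℕ} (A : Matrix (Fin m) (Fin N) ℂ) (i : Fin N) : Fin m → ℂ := fun a => A a i

/-- Maronna fixed-point equation for the scatter-matrix estimator built on the
sample vectors `z 0, …, z (N-1)`. -/
def isFP {m N : ℕ} (u : ℝ → ℝ) (z : Fin N → Fin m → ℂ)
    (S : Matrix (Fin m) (Fin m) ℂ) : Prop :=
  S = (N : ℂ)⁻¹ • ∑ i : Fin N,
        u ((m : ℝ)⁻¹ * (star (z i) ⬝ᵥ (S⁻¹ *ᵥ z i)).re) • vecOuter (z i)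

/-- Truncated spectral density `γ_m(λ) = ∑_{|k| ≤ m-1} c_k e^{ikλ}`. -/
def symbolTrunc (cf : ℤ → ℂ) (m : ℕ) (l : ℝ) : ℂ :=
  ∑ k ∈ Finset.Icc (1 - (m : ℤ)) ((m : ℤ) - 1),
    cf k * Complex.exp (Complex.I * (k : ℂ) * (l : ℂ))

/-- `‖γ‖_∞ = sup_{λ ∈ [0,2π)} |∑_{k ∈ ℤ} c_k e^{ikλ}|`. -/
def supSymbol (cf : ℤ → ℂ) : ℝ :=
  ⨆ l ∈ Set.Ico (0 : ℝ) (2 * π),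
    ‖∑' k : ℤ, cf k * Complex.exp (Complex.I * (k : ℂ) * (l : ℂ))‖

/-- Grid point `λ_i = 2πi/⌊N^β⌋`. -/
def gridPt (N : ℕ) (β : ℝ) (i : ℕ) : ℝ :=
  2 * π * (i : ℝ) / (Nat.floor ((N : ℝ) ^ β) : ℝ)


theorem aux_entry {m : ℕ} (Q : Matrix (Fin m) (Fin m) ℂ) (hQ : Q.IsHermitian) (i j : Fin m) :
    toep Q i j = (m : ℂ)⁻¹ * ∑ a : Fin m, ∑ b : Fin m,
      if (b : ℕ) + i = a + j then Q a b else 0 := by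
  have key : ∀ (k : ℕ) (l : Fin m) (f : Fin m → ℂ), (if h : (l : ℕ) + k < m then f ⟨(l : ℕ) + k, h⟩ else 0)
      = ∑ b : Fin m, if (b : ℕ) = l + k then f b else 0 := by
    intro k l f
    split_ifs with h
    · rw [Finset.sum_eq_single ⟨(l : ℕ) + k, h⟩]
      · simp
      · intro b _ hb
        rw [if_neg]
        intro h'
        exact hb (Fin.ext h')
      · simp
    · rw [Finset.sum_eq_zero]
      intro b _
      rw [if_neg]
      have := b.2
      omega
  unfold toep supDiagAvg
  simp only [Matrix.of_apply]
  split_ifs with hij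
  · congr 1
    refine Finset.sum_congr rfl fun a _ => ?_
    rw [key _ a (fun b => Q a b)]
    refine Finset.sum_congr rfl fun b _ => ?_
    have : ((b : ℕ) = a + (j - i)) ↔ ((b : ℕ) + i = a + j) := by omega
    simp only [this]
  · rw [Finset.sum_comm]
    simp only [star_mul', star_inv₀, star_natCast, star_sum]
    congr 1
    refine Finset.sum_congr rfl fun a _ => ?_
    rw [key _ a (fun b => Q a b), star_sum]
    refine Finset.sum_congr rfl fun b _ => ?_
    have : ((b : ℕ) = a + (i - j)) ↔ ((a : ℕ) + i = b + j) := by omega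
    simp only [this]
    split_ifs
    · exact hQ.apply b a
    · simp

/-- shifted vector -/
def shiftv {m : ℕ} (s : ℕ) (x : EuclideanSpace ℂ (Fin m)) : EuclideanSpace ℂ (Fin m) :=
  WithLp.toLp 2 fun a : Fin m => ∑ i : Fin m, if (a : ℕ) + m = i + s then x i else 0

theorem aux_ind {m : ℕ} (a i : Fin m) (c : ℝ) :
    ∑ s ∈ Finset.range (2 * m), (if (a : ℕ) + m = i + s then c else 0) = c := by
  have := a.2
  have := i.2
  rw [Finset.sum_eq_single (a + m - i)]
  · rw [if_pos]; omega
  · intro b _ hb; rw [if_neg]; omega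
  · intro h; exfalso; apply h; rw [Finset.mem_range]; omega

theorem aux_norm {m : ℕ} (x : EuclideanSpace ℂ (Fin m)) :
    ∑ s ∈ Finset.range (2 * m), ‖shiftv s x‖ ^ 2 = m * ‖x‖ ^ 2 := by
  have h1 : ∀ s (a : Fin m), ‖shiftv s x a‖ ^ 2 =
      ∑ i : Fin m, if (a : ℕ) + m = i + s then ‖x i‖ ^ 2 else 0 := by
    intro s a
    simp only [shiftv]
    by_cases h : ∃ i : Fin m, (a : ℕ) + m = i + s
    · obtain ⟨i, hi⟩ := h
      rw [Finset.sum_eq_single i, Finset.sum_eq_single i]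
      · simp [hi]
      · intro b _ hb; rw [if_neg]; intro h; apply hb; ext; omega
      · simp
      · intro b _ hb; rw [if_neg]; intro h; apply hb; ext; omega
      · simp
    · push Not at h
      simp [h]
  simp only [EuclideanSpace.norm_sq_eq, h1]
  rw [Finset.sum_comm]
  have : ∀ a : Fin m, ∑ s ∈ Finset.range (2 * m), ∑ i : Fin m,
      (if (a : ℕ) + m = i + s then ‖x i‖ ^ 2 else 0) = ∑ i : Fin m, ‖x i‖ ^ 2 := by
    intro a
    rw [Finset.sum_comm]
    exact Finset.sum_congr rfl fun i _ => aux_ind a i _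
  simp [this]

theorem aux_inner_mat {m : ℕ} (A : Matrix (Fin m) (Fin m) ℂ) (x y : EuclideanSpace ℂ (Fin m)) :
    inner ℂ x (Matrix.toEuclideanLin A y) = ∑ a, ∑ b, star (x a) * A a b * y b := by
  simp only [PiLp.inner_apply, RCLike.inner_apply, Matrix.toLpLin_apply, Matrix.mulVec, dotProduct,
    Finset.sum_mul]
  refine Finset.sum_congr rfl fun a _ => Finset.sum_congr rfl fun b _ => ?_
  simp only [RCLike.star_def]
  ring

theorem aux_swap {m : ℕ} (t : Finset ℕ) (F : Fin m → Fin m → Fin m → Fin m → ℕ → ℂ) :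
    ∑ i, ∑ j, ∑ a, ∑ b, ∑ s ∈ t, F i j a b s = ∑ s ∈ t, ∑ a, ∑ b, ∑ i, ∑ j, F i j a b s := by
  have h1 : ∀ G : Fin m → Fin m → Fin m → Fin m → ℂ,
      ∑ i, ∑ j, ∑ a, ∑ b, G i j a b = ∑ a, ∑ b, ∑ i, ∑ j, G i j a b := by
    intro G
    calc _ = ∑ i, ∑ a, ∑ j, ∑ b, G i j a b :=
          Finset.sum_congr rfl fun i _ => Finset.sum_comm
      _ = ∑ a, ∑ i, ∑ j, ∑ b, G i j a b := Finset.sum_comm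
      _ = ∑ a, ∑ i, ∑ b, ∑ j, G i j a b :=
          Finset.sum_congr rfl fun a _ => Finset.sum_congr rfl fun i _ => Finset.sum_comm
      _ = _ := Finset.sum_congr rfl fun a _ => Finset.sum_comm
  rw [h1, Finset.sum_comm (s := t)]
  refine Finset.sum_congr rfl fun a _ => ?_
  rw [Finset.sum_comm (s := t)]
  refine Finset.sum_congr rfl fun b _ => ?_
  rw [Finset.sum_comm (s := t)]
  refine Finset.sum_congr rfl fun i _ => ?_
  rw [Finset.sum_comm (s := t)]

theorem aux_inner {m : ℕ} (Q : Matrix (Fin m) (Fin m) ℂ) (hQ : Q.IsHermitian)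
    (x y : EuclideanSpace ℂ (Fin m)) :
    inner ℂ x (Matrix.toEuclideanLin (toep Q) y) = (m : ℂ)⁻¹ *
      ∑ s ∈ Finset.range (2 * m), inner ℂ (shiftv s x) (Matrix.toEuclideanLin Q (shiftv s y)) := by
  simp only [aux_inner_mat, aux_entry Q hQ]
  have h1 : ∀ (s : ℕ) (a b : Fin m), star (shiftv s x a) * Q a b * shiftv s y b =
      ∑ i : Fin m, ∑ j : Fin m, if (a : ℕ) + m = i + s ∧ (b : ℕ) + m = j + s then
        star (x i) * Q a b * y j else 0 := by
    intro s a b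
    simp only [shiftv, star_sum, Finset.sum_mul, Finset.mul_sum]
    rw [Finset.sum_comm]
    refine Finset.sum_congr rfl fun i _ => Finset.sum_congr rfl fun j _ => ?_
    by_cases h : (a : ℕ) + m = i + s <;> by_cases h' : (b : ℕ) + m = j + s <;> simp [h, h']
  have h2 : ∀ (a b i j : Fin m) (c : ℂ), ∑ s ∈ Finset.range (2 * m),
      (if (a : ℕ) + m = i + s ∧ (b : ℕ) + m = j + s then c else 0) =
      if (b : ℕ) + i = a + j then c else 0 := by
    intro a b i j c
    have := a.2
    have := i.2
    rw [Finset.sum_eq_single (a + m - i)]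
    · congr 1
      rw [eq_iff_iff]; omega
    · intro b _ hb; rw [if_neg]; omega
    · intro h; exfalso; apply h; rw [Finset.mem_range]; omega
  simp only [h1]
  calc _ = (m : ℂ)⁻¹ * ∑ i : Fin m, ∑ j : Fin m, ∑ a : Fin m, ∑ b : Fin m,
        (if (b : ℕ) + i = a + j then star (x i) * Q a b * y j else 0) := by
        simp only [Finset.mul_sum, Finset.sum_mul]
        refine Finset.sum_congr rfl fun i _ => Finset.sum_congr rfl fun j _ =>
          Finset.sum_congr rfl fun a _ => Finset.sum_congr rfl fun b _ => ?_
        split_ifs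
        · ring
        · simp
    _ = _ := by
        congr 1
        simp only [← h2]
        exact aux_swap _ _

theorem stmt12 {m : ℕ} (Q : Matrix (Fin m) (Fin m) ℂ) (hQ : Q.IsHermitian) :
    opNorm (toep Q) ≤ opNorm Q := by
  have hC : 0 ≤ opNorm Q := norm_nonneg _
  have hb : ∀ x y : EuclideanSpace ℂ (Fin m),
      ‖inner ℂ x (Matrix.toEuclideanLin (toep Q) y)‖ ≤ opNorm Q * ‖x‖ * ‖y‖ := by
    intro x y
    rw [aux_inner Q hQ, norm_mul]
    rcases Nat.eq_zero_or_pos m with rfl | hm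
    · simp; positivity
    have hm' : (0 : ℝ) < m := by exact_mod_cast hm
    have h1 : ‖∑ s ∈ Finset.range (2 * m),
        inner ℂ (shiftv s x) (Matrix.toEuclideanLin Q (shiftv s y))‖ ≤
        opNorm Q * ∑ s ∈ Finset.range (2 * m), ‖shiftv s x‖ * ‖shiftv s y‖ := by
      rw [Finset.mul_sum]
      refine norm_sum_le_of_le _ fun s _ => ?_
      refine (norm_inner_le_norm _ _).trans ?_
      have := (LinearMap.toContinuousLinearMap (Matrix.toEuclideanLin Q)).le_opNorm (shiftv s y)
      calc _ ≤ ‖shiftv s x‖ * (opNorm Q * ‖shiftv s y‖) :=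
            mul_le_mul_of_nonneg_left this (norm_nonneg _)
        _ = _ := by ring
    have h2 : ∑ s ∈ Finset.range (2 * m), ‖shiftv s x‖ * ‖shiftv s y‖ ≤ m * (‖x‖ * ‖y‖) := by
      have := Finset.sum_mul_sq_le_sq_mul_sq (Finset.range (2 * m))
        (fun s => ‖shiftv s x‖) (fun s => ‖shiftv s y‖)
      rw [aux_norm, aux_norm] at this
      refine abs_le_of_sq_le_sq' ?_ (by positivity) |>.2
      calc _ ≤ _ := this
        _ = _ := by ring
    have h3 := h1.trans (mul_le_mul_of_nonneg_left h2 hC)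
    rw [norm_inv, Complex.norm_natCast, inv_mul_le_iff₀ hm']
    calc _ ≤ _ := h3
      _ = _ := by ring
  refine ContinuousLinearMap.opNorm_le_bound _ hC fun y => ?_
  change ‖Matrix.toEuclideanLin (toep Q) y‖ ≤ _
  have h := hb (Matrix.toEuclideanLin (toep Q) y) y
  rw [inner_self_eq_norm_sq_to_K] at h
  set t := ‖Matrix.toEuclideanLin (toep Q) y‖ with ht
  have ht0 : 0 ≤ t := norm_nonneg _
  have h' : t ^ 2 ≤ opNorm Q * t * ‖y‖ := by simpa [abs_of_nonneg ht0] using h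
  rcases ht0.eq_or_lt with h0 | h0
  · rw [← h0]; positivity
  · refine le_of_mul_le_mul_left ?_ h0
    calc _ = t ^ 2 := by ring
      _ ≤ _ := h'
      _ = _ := by ring


end
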